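/- If Λ² = ζ², the limiting loss density f(x) = (ζ/|Λ|)·φ((ζ·Φ⁻¹(x) − Σ·Φ⁻¹(p))/|Λ|)/φ(Φ⁻¹(x)) is monotone on (0,1): it is strictly increasing if p > 1/2, strictly decreasing if p < 1/2, and constant if p = 1/2. -/

import Mathlib

open MeasureTheory ProbabilityTheory Real Filter Set

/-- The density of the standard normal distribution. -/
noncomputable def stdPdf (y : ℝ) : ℝ := Real.exp (-y ^ 2 / 2) / Real.sqrt (2 * Real.pi)

/-- The cumulative distribution function `Φ` of the standard normal distribution. -/
noncomputable def stdCdf (x : ℝ) : ℝ := ∫ y in Set.Iic x, stdPdf y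

/-- The inverse `Φ⁻¹` of the standard normal cumulative distribution function: since `stdCdf`
is injective, `stdCdfInv` is the genuine inverse of `Φ` on `(0,1)`. -/
noncomputable def stdCdfInv : ℝ → ℝ := Function.invFun stdCdf

lemma stdPdf_pos (y : ℝ) : 0 < stdPdf y := by
  unfold stdPdf; positivity

lemma stdPdf_cont : Continuous stdPdf := by
  unfold stdPdf; fun_prop

lemma stdPdf_eq : stdPdf = gaussianPDFReal 0 1 := by
  funext y
  simp [stdPdf, gaussianPDFReal]
  ring

lemma stdPdf_int : Integrable stdPdf := by
  rw [stdPdf_eq]; exact integrable_gaussianPDFReal 0 1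

lemma stdPdf_integral : ∫ y, stdPdf y = 1 := by
  rw [stdPdf_eq]; exact integral_gaussianPDFReal_eq_one 0 one_ne_zero

lemma stdCdf_add_Ioi (x : ℝ) : stdCdf x + ∫ y in Set.Ioi x, stdPdf y = 1 := by
  have h := integral_add_compl (measurableSet_Iic (a := x)) stdPdf_int
  rw [Set.compl_Iic, stdPdf_integral] at h
  exact h

lemma stdCdf_zero : stdCdf 0 = 1 / 2 := by
  have h := stdCdf_add_Ioi 0
  have h2 := integral_comp_neg_Iic 0 stdPdf
  have h3 : ∀ y, stdPdf (-y) = stdPdf y := fun y => by simp [stdPdf]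
  simp only [h3, neg_zero] at h2
  rw [← h2] at h
  unfold stdCdf at *
  linarith

lemma stdCdf_sub (a b : ℝ) : stdCdf b - stdCdf a = ∫ y in a..b, stdPdf y :=
  intervalIntegral.integral_Iic_sub_Iic stdPdf_int.integrableOn stdPdf_int.integrableOn

lemma stdCdf_strictMono : StrictMono stdCdf := by
  intro a b hab
  have h := stdCdf_sub a b
  have := intervalIntegral.intervalIntegral_pos_of_pos
    (stdPdf_cont.intervalIntegrable a b) stdPdf_pos hab
  linarith

lemma stdCdf_cont : Continuous stdCdf := by
  have h : stdCdf = fun x => stdCdf 0 + ∫ y in (0:ℝ)..x, stdPdf y := by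
    funext x; rw [← stdCdf_sub]; ring
  rw [h]
  exact continuous_const.add
    (intervalIntegral.continuous_primitive (fun a b => stdPdf_cont.intervalIntegrable a b) 0)

lemma stdCdf_top : Tendsto stdCdf atTop (nhds 1) := by
  have h : stdCdf = fun x => stdCdf 0 + ∫ y in (0:ℝ)..x, stdPdf y := by
    funext x; rw [← stdCdf_sub]; ring
  rw [h, ← stdCdf_add_Ioi 0]
  exact tendsto_const_nhds.add
    (intervalIntegral_tendsto_integral_Ioi 0 stdPdf_int.integrableOn tendsto_id)

lemma stdCdf_bot : Tendsto stdCdf atBot (nhds 0) := by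
  have h : stdCdf = fun x => stdCdf 0 - ∫ y in x..(0:ℝ), stdPdf y := by
    funext x; rw [← stdCdf_sub]; ring
  have h2 : (0:ℝ) = stdCdf 0 - ∫ y in Set.Iic 0, stdPdf y := by simp [stdCdf]
  have h3 : Tendsto (fun x => stdCdf 0 - ∫ y in x..(0:ℝ), stdPdf y) atBot
      (nhds (stdCdf 0 - ∫ y in Set.Iic 0, stdPdf y)) :=
    tendsto_const_nhds.sub
      (intervalIntegral_tendsto_integral_Iic 0 stdPdf_int.integrableOn tendsto_id)
  rw [← h2, ← h] at h3
  exact h3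

lemma stdCdf_inv {x : ℝ} (hx : x ∈ Set.Ioo (0:ℝ) 1) : stdCdf (stdCdfInv x) = x := by
  apply Function.invFun_eq
  obtain ⟨a, ha⟩ := (stdCdf_bot.eventually (gt_mem_nhds hx.1)).exists
  obtain ⟨b, hb⟩ := (stdCdf_top.eventually (lt_mem_nhds hx.2)).exists
  exact mem_range_of_exists_le_of_exists_ge stdCdf_cont ⟨a, ha.le⟩ ⟨b, hb.le⟩

/-- if `Λ² = ζ²`, the limiting loss density is monotone on `(0,1)`: strictly
increasing if `p > 1/2`, strictly decreasing if `p < 1/2`, and constant if `p = 1/2`. -/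
theorem limiting_density_monotone
    (Sg ζ Λ p : ℝ)
    (hSg : 0 < Sg) (hζ : 0 < ζ) (hΛ : Λ ≠ 0) (hp : p ∈ Set.Ioo (0 : ℝ) 1)
    (f : ℝ → ℝ)
    (hf : ∀ x ∈ Set.Ioo (0 : ℝ) 1,
      f x = (ζ / |Λ|) * stdPdf ((ζ * stdCdfInv x - Sg * stdCdfInv p) / |Λ|)
              / stdPdf (stdCdfInv x))
    (hcase : Λ ^ 2 = ζ ^ 2) :
    (1 / 2 < p → StrictMonoOn f (Set.Ioo 0 1)) ∧
    (p < 1 / 2 → StrictAntiOn f (Set.Ioo 0 1)) ∧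
    (p = 1 / 2 → ∀ x ∈ Set.Ioo (0 : ℝ) 1, ∀ y ∈ Set.Ioo (0 : ℝ) 1, f x = f y) := by
  have hΛζ : |Λ| = ζ := by
    rw [← abs_of_pos hζ]; exact (sq_eq_sq_iff_abs_eq_abs _ _).1 hcase
  set q := stdCdfInv p with hq
  have hqp : stdCdf q = p := stdCdf_inv hp
  have hf' : ∀ x ∈ Set.Ioo (0 : ℝ) 1,
      f x = Real.exp ((Sg / ζ * q) * stdCdfInv x - (Sg / ζ * q) ^ 2 / 2) := by
    intro x hx
    rw [hf x hx, hΛζ, div_self hζ.ne', one_mul]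
    have e : (ζ * stdCdfInv x - Sg * q) / ζ = stdCdfInv x - Sg / ζ * q := by
      field_simp
    rw [e]
    unfold stdPdf
    rw [div_div_div_cancel_right₀ (by positivity), ← Real.exp_sub]
    congr 1
    ring
  have hinv : ∀ x ∈ Set.Ioo (0 : ℝ) 1, ∀ y ∈ Set.Ioo (0 : ℝ) 1, x < y →
      stdCdfInv x < stdCdfInv y := by
    intro x hx y hy hxy
    rw [← stdCdf_strictMono.lt_iff_lt, stdCdf_inv hx, stdCdf_inv hy]
    exact hxy
  have hs : 0 < Sg / ζ := by positivity
  refine ⟨fun h x hx y hy hxy => ?_, fun h x hx y hy hxy => ?_, fun h x hx y hy => ?_⟩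
  · have hq0 : 0 < q := by
      rw [← stdCdf_strictMono.lt_iff_lt, stdCdf_zero, hqp]; exact h
    rw [hf' x hx, hf' y hy, Real.exp_lt_exp]
    have := mul_lt_mul_of_pos_left (hinv x hx y hy hxy) (mul_pos hs hq0)
    linarith
  · have hq0 : q < 0 := by
      rw [← stdCdf_strictMono.lt_iff_lt, stdCdf_zero, hqp]; exact h
    rw [hf' x hx, hf' y hy, Real.exp_lt_exp]
    have := mul_lt_mul_of_neg_left (hinv x hx y hy hxy) (mul_neg_of_pos_of_neg hs hq0)
    linarith
  · have hq0 : q = 0 := by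
      apply stdCdf_strictMono.injective
      rw [stdCdf_zero, hqp, h]
    rw [hf' x hx, hf' y hy, hq0]
    simp
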